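/- Let F ⊆ E be a flat, R a face of 𝒜_F, and 𝒻 : F = F_0 ⊊ F_1 ⊊ ⋯ ⊊ F_k = E a flag of flats based at F. Suppose S = F_j for some 0 ≤ j ≤ k and R' is a face of 𝒜_S contained in the topological closure of R. Then span(σ_{F,R}) ⊆ span(σ_{S,R'}) in Ñ, and the induced linear map W_{F,R} → W_{S,R'} maps C^{(F,R)}_𝒻 onto C^{(S,R')}_{trunc_S(𝒻)}, where trunc_S(𝒻) is the truncated flag S = F_j ⊊ F_{j+1} ⊊ ⋯ ⊊ F_k = E. (Second part of Lemma 6.2: the projection of the tropical cone to a deeper stratum is the truncated tropical cone.) -/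

import Mathlib

open Set Submodule

noncomputable section

variable {E : Type*} [Fintype E] [DecidableEq E]
variable {M : Type*} [NormedAddCommGroup M] [NormedSpace ℝ M] [FiniteDimensional ℝ M]

/-- The positive closed halfspace `H_e^+` of the hyperplane `H_e`. -/
def Hplus (a : E → (M →ₗ[ℝ] ℝ)) (r : E → ℝ) (e : E) : Set M := {m | a e m + r e ≤ 0}

/-- The negative closed halfspace `H_e^-` of the hyperplane `H_e`. -/
def Hminus (a : E → (M →ₗ[ℝ] ℝ)) (r : E → ℝ) (e : E) : Set M := {m | 0 ≤ a e m + r e}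

/-- `R` is a face of the localization `𝒜_S`: a nonempty fiber of the sign map
`M → SignType^S`, `m ↦ (sign (a e m + r e))_{e ∈ S}`. -/
def IsFace (a : E → (M →ₗ[ℝ] ℝ)) (r : E → ℝ) (S : Set E) (R : Set M) : Prop :=
  ∃ m₀ : M, R = {m : M | ∀ e ∈ S, SignType.sign (a e m + r e) = SignType.sign (a e m₀ + r e)}

/-- `S^+(R)`: the elements `e ∈ S` with `R ⊆ H_e^+`. -/
def posSet (a : E → (M →ₗ[ℝ] ℝ)) (r : E → ℝ) (S : Set E) (R : Set M) : Set E :=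
  {e ∈ S | R ⊆ Hplus a r e}

/-- `S^-(R)`: the elements `e ∈ S` with `R ⊆ H_e^-`. -/
def negSet (a : E → (M →ₗ[ℝ] ℝ)) (r : E → ℝ) (S : Set E) (R : Set M) : Set E :=
  {e ∈ S | R ⊆ Hminus a r e}

/-- `S^0(R) = S^+(R) ∩ S^-(R)`. -/
def zeroSet (a : E → (M →ₗ[ℝ] ℝ)) (r : E → ℝ) (S : Set E) (R : Set M) : Set E :=
  posSet a r S R ∩ negSet a r S R

/-- The linear map `(E → ℝ) → N` sending the basis vector `δ_e` to `a_e`. -/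
def toN (a : E → (M →ₗ[ℝ] ℝ)) : (E → ℝ) →ₗ[ℝ] (M →ₗ[ℝ] ℝ) :=
  Fintype.linearCombination ℝ a

/-- `Λ`, the kernel of `(E → ℝ) → N`. -/
def Lam (a : E → (M →ₗ[ℝ] ℝ)) : Submodule ℝ (E → ℝ) := LinearMap.ker (toN a)

/-- The antidiagonal embedding `∇ : x ↦ (x, -x)`. -/
def nabla : (E → ℝ) →ₗ[ℝ] (E → ℝ) × (E → ℝ) :=
  LinearMap.prod LinearMap.id (-LinearMap.id)

/-- `∇(Λ)`. -/
def nabLam (a : E → (M →ₗ[ℝ] ℝ)) : Submodule ℝ ((E → ℝ) × (E → ℝ)) :=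
  (Lam a).map nabla

/-- The Lawrence cocharacter space `Ñ = ((E → ℝ) × (E → ℝ))/∇(Λ)`. -/
abbrev tildeN (a : E → (M →ₗ[ℝ] ℝ)) : Type _ := ((E → ℝ) × (E → ℝ)) ⧸ nabLam a

/-- `ρ_e^+`, the image of `(δ_e, 0)` in `Ñ`. -/
def rhoP (a : E → (M →ₗ[ℝ] ℝ)) (e : E) : tildeN a :=
  Submodule.Quotient.mk (Pi.single e 1, 0)

/-- `ρ_e^-`, the image of `(0, δ_e)` in `Ñ`. -/
def rhoM (a : E → (M →ₗ[ℝ] ℝ)) (e : E) : tildeN a :=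
  Submodule.Quotient.mk (0, Pi.single e 1)

/-- The cone `σ_{S,R} ⊆ Ñ` generated by `{ρ_e^+ : e ∈ S^+(R)} ∪ {ρ_f^- : f ∈ S^-(R)}`
together with `0`: the set of all nonnegative linear combinations of these generators. -/
def sigmaCone (a : E → (M →ₗ[ℝ] ℝ)) (r : E → ℝ) (S : Set E) (R : Set M) : Set (tildeN a) :=
  {v | ∃ c d : E → ℝ, (∀ e, 0 ≤ c e) ∧ (∀ e, 0 ≤ d e) ∧
    v = ∑ e, (posSet a r S R).indicator c e • rhoP a e
      + ∑ e, (negSet a r S R).indicator d e • rhoM a e}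

/-- The addition map `(x, y) ↦ x + y` on `(E → ℝ) × (E → ℝ)`. -/
def addMap (E : Type*) [Fintype E] : ((E → ℝ) × (E → ℝ)) →ₗ[ℝ] (E → ℝ) :=
  LinearMap.fst ℝ (E → ℝ) (E → ℝ) + LinearMap.snd ℝ (E → ℝ) (E → ℝ)

lemma nabLam_le_ker_addMap (a : E → (M →ₗ[ℝ] ℝ)) :
    nabLam a ≤ LinearMap.ker (addMap E) := by
  rintro v ⟨x, hx, rfl⟩
  simp [addMap, nabla]

/-- The map `Φ̄ : Ñ → (E → ℝ)` induced by `(x, y) ↦ x + y`; it satisfies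
`Φ̄(ρ_e^+) = Φ̄(ρ_e^-) = δ_e`. -/
def Phibar (a : E → (M →ₗ[ℝ] ℝ)) : tildeN a →ₗ[ℝ] (E → ℝ) :=
  (nabLam a).liftQ (addMap E) (nabLam_le_ker_addMap a)

lemma Phibar_rhoP (a : E → (M →ₗ[ℝ] ℝ)) (e : E) :
    Phibar a (rhoP a e) = Pi.single e 1 := by
  simp [Phibar, rhoP, addMap]

lemma Phibar_rhoM (a : E → (M →ₗ[ℝ] ℝ)) (e : E) :
    Phibar a (rhoM a e) = Pi.single e 1 := by
  simp [Phibar, rhoM, addMap]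

/-- `ℝ^F`, the span of the coordinate vectors `δ_e` for `e ∈ F`. -/
def RF (E : Type*) [Fintype E] [DecidableEq E] (F : Set E) : Submodule ℝ (E → ℝ) :=
  Submodule.span ℝ ((fun e => Pi.single e (1 : ℝ)) '' F)

/-- The linear span of the cone `σ_{F,R}` in `Ñ`. -/
def spanSigma (a : E → (M →ₗ[ℝ] ℝ)) (r : E → ℝ) (F : Set E) (R : Set M) :
    Submodule ℝ (tildeN a) :=
  Submodule.span ℝ (sigmaCone a r F R)

/-- `W_{F,R} = Ñ / span(σ_{F,R})`. -/
abbrev Wspace (a : E → (M →ₗ[ℝ] ℝ)) (r : E → ℝ) (F : Set E) (R : Set M) : Type _ :=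
  tildeN a ⧸ spanSigma a r F R

/-- The quotient map `π_{F,R} : Ñ → W_{F,R}`. -/
def piFR (a : E → (M →ₗ[ℝ] ℝ)) (r : E → ℝ) (F : Set E) (R : Set M) :
    tildeN a →ₗ[ℝ] Wspace a r F R :=
  (spanSigma a r F R).mkQ

lemma spanSigma_le_ker (a : E → (M →ₗ[ℝ] ℝ)) (r : E → ℝ) (F : Set E) (R : Set M) :
    spanSigma a r F R ≤ LinearMap.ker ((RF E F).mkQ ∘ₗ Phibar a) := by
  rw [spanSigma, Submodule.span_le]
  rintro v ⟨c, d, hc, hd, rfl⟩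
  simp only [SetLike.mem_coe, LinearMap.mem_ker, LinearMap.comp_apply]
  rw [Submodule.mkQ_apply, Submodule.Quotient.mk_eq_zero, map_add, map_sum, map_sum]
  simp only [map_smul]
  apply Submodule.add_mem
  · apply Submodule.sum_mem
    intro e _
    by_cases he : e ∈ posSet a r F R
    · rw [Set.indicator_of_mem he]
      exact Submodule.smul_mem _ _
        (by rw [Phibar_rhoP]; exact Submodule.subset_span ⟨e, he.1, rfl⟩)
    · rw [Set.indicator_of_notMem he, zero_smul]
      exact Submodule.zero_mem _
  · apply Submodule.sum_mem
    intro e _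
    by_cases he : e ∈ negSet a r F R
    · rw [Set.indicator_of_mem he]
      exact Submodule.smul_mem _ _
        (by rw [Phibar_rhoM]; exact Submodule.subset_span ⟨e, he.1, rfl⟩)
    · rw [Set.indicator_of_notMem he, zero_smul]
      exact Submodule.zero_mem _

/-- The induced surjection `Φ̄_{F,R} : W_{F,R} → (E → ℝ)/ℝ^F`. -/
def PhibarFR (a : E → (M →ₗ[ℝ] ℝ)) (r : E → ℝ) (F : Set E) (R : Set M) :
    Wspace a r F R →ₗ[ℝ] ((E → ℝ) ⧸ RF E F) :=
  (spanSigma a r F R).liftQ ((RF E F).mkQ ∘ₗ Phibar a) (spanSigma_le_ker a r F R)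

/-- `F ⊆ E` is a flat of the configuration `a`. -/
def IsFlat (a : E → (M →ₗ[ℝ] ℝ)) (F : Set E) : Prop :=
  F = {e : E | a e ∈ Submodule.span ℝ (a '' F)}

/-- The Bergman cone of a flag `𝒻 : F = F_0 ⊊ F_1 ⊊ ⋯ ⊊ F_k = E`:
`{c_1 δ_{F_1} + ⋯ + c_{k-1} δ_{F_{k-1}} + c δ_E : c_1, …, c_{k-1} ≥ 0, c ∈ ℝ} ⊆ ℝ^E`. -/
def bergCone {E : Type*} [Fintype E] (k : ℕ) (flag : Fin (k + 1) → Set E) : Set (E → ℝ) :=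
  {v | ∃ c : Fin (k + 1) → ℝ, c 0 = 0 ∧ (∀ i : Fin (k + 1), 0 < i.val → i.val < k → 0 ≤ c i) ∧
    v = ∑ i : Fin (k + 1), c i • (flag i).indicator (1 : E → ℝ)}

/-- The cone `C^{(F,R)}_𝒻 = Φ̄_{F,R}⁻¹(β_𝒻) ⊆ W_{F,R}` of `Trop(𝔐_𝒜)`, where
`β_𝒻 ⊆ (E → ℝ)/ℝ^F` is the image of the Bergman cone of the flag `𝒻`. -/
def Ccone (a : E → (M →ₗ[ℝ] ℝ)) (r : E → ℝ) (F : Set E) (R : Set M)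
    (k : ℕ) (flag : Fin (k + 1) → Set E) : Set (Wspace a r F R) :=
  PhibarFR a r F R ⁻¹' ((RF E F).mkQ '' bergCone k flag)

lemma posSet_mono (a : E → (M →ₗ[ℝ] ℝ)) (r : E → ℝ) {F S : Set E} {R R' : Set M}
    (hFS : F ⊆ S) (hsub : R' ⊆ closure R) : posSet a r F R ⊆ posSet a r S R' := by
  rintro e ⟨he, h⟩
  refine ⟨hFS he, hsub.trans (closure_minimal h ?_)⟩
  have hc : Continuous (a e) := (a e).continuous_of_finiteDimensional
  exact isClosed_le (hc.add continuous_const) continuous_const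

lemma negSet_mono (a : E → (M →ₗ[ℝ] ℝ)) (r : E → ℝ) {F S : Set E} {R R' : Set M}
    (hFS : F ⊆ S) (hsub : R' ⊆ closure R) : negSet a r F R ⊆ negSet a r S R' := by
  rintro e ⟨he, h⟩
  refine ⟨hFS he, hsub.trans (closure_minimal h ?_)⟩
  have hc : Continuous (a e) := (a e).continuous_of_finiteDimensional
  exact isClosed_le continuous_const (hc.add continuous_const)

lemma rhoP_mem_spanSigma (a : E → (M →ₗ[ℝ] ℝ)) (r : E → ℝ) {S : Set E} {R : Set M} {e : E}
    (he : e ∈ posSet a r S R) : rhoP a e ∈ spanSigma a r S R := by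
  apply Submodule.subset_span
  refine ⟨Pi.single e 1, 0, fun x => ?_, fun _ => le_rfl, ?_⟩
  · by_cases h : x = e
    · subst h; simp
    · simp [h]
  · rw [Finset.sum_eq_single e]
    · simp [Set.indicator_of_mem he]
    · intro b _ hb
      by_cases h : b ∈ posSet a r S R
      · simp [Set.indicator_of_mem h, hb]
      · simp [Set.indicator_of_notMem h]
    · simp

lemma rhoM_mem_spanSigma (a : E → (M →ₗ[ℝ] ℝ)) (r : E → ℝ) {S : Set E} {R : Set M} {e : E}
    (he : e ∈ negSet a r S R) : rhoM a e ∈ spanSigma a r S R := by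
  apply Submodule.subset_span
  refine ⟨0, Pi.single e 1, fun _ => le_rfl, fun x => ?_, ?_⟩
  · by_cases h : x = e
    · subst h; simp
    · simp [h]
  · rw [Finset.sum_eq_single (s := Finset.univ)
      (f := fun e' => (negSet a r S R).indicator (Pi.single e 1 : E → ℝ) e' • rhoM a e') e]
    · simp [Set.indicator_of_mem he]
    · intro b _ hb
      by_cases h : b ∈ negSet a r S R
      · simp [Set.indicator_of_mem h, hb]
      · simp [Set.indicator_of_notMem h]
    · simp

lemma spanSigma_mono (a : E → (M →ₗ[ℝ] ℝ)) (r : E → ℝ) {F S : Set E} {R R' : Set M}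
    (hFS : F ⊆ S) (hsub : R' ⊆ closure R) : spanSigma a r F R ≤ spanSigma a r S R' := by
  rw [spanSigma, Submodule.span_le]
  rintro v ⟨c, d, hc, hd, rfl⟩
  refine Submodule.add_mem _ (Submodule.sum_mem _ fun e _ => ?_)
    (Submodule.sum_mem _ fun e _ => ?_)
  · by_cases he : e ∈ posSet a r F R
    · exact Submodule.smul_mem _ _ (rhoP_mem_spanSigma a r (posSet_mono a r hFS hsub he))
    · rw [Set.indicator_of_notMem he, zero_smul]; exact Submodule.zero_mem _
  · by_cases he : e ∈ negSet a r F R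
    · exact Submodule.smul_mem _ _ (rhoM_mem_spanSigma a r (negSet_mono a r hFS hsub he))
    · rw [Set.indicator_of_notMem he, zero_smul]; exact Submodule.zero_mem _

lemma mem_pos_or_neg (a : E → (M →ₗ[ℝ] ℝ)) (r : E → ℝ) {S : Set E} {R : Set M}
    (hR : IsFace a r S R) {e : E} (he : e ∈ S) : e ∈ posSet a r S R ∨ e ∈ negSet a r S R := by
  obtain ⟨m₀, rfl⟩ := hR
  rcases le_total (a e m₀ + r e) 0 with h | h
  · left
    refine ⟨he, fun m hm => ?_⟩
    have := hm e he
    rw [← sign_nonpos_iff, ← this, sign_nonpos_iff] at h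
    exact h
  · right
    refine ⟨he, fun m hm => ?_⟩
    have := hm e he
    rw [← sign_nonneg_iff, ← this, sign_nonneg_iff] at h
    exact h

lemma RF_le_map (a : E → (M →ₗ[ℝ] ℝ)) (r : E → ℝ) {S : Set E} {R : Set M}
    (hR : IsFace a r S R) : RF E S ≤ (spanSigma a r S R).map (Phibar a) := by
  rw [RF, Submodule.span_le]
  rintro _ ⟨e, he, rfl⟩
  rcases mem_pos_or_neg a r hR he with h | h
  · exact ⟨rhoP a e, rhoP_mem_spanSigma a r h, Phibar_rhoP a e⟩
  · exact ⟨rhoM a e, rhoM_mem_spanSigma a r h, Phibar_rhoM a e⟩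

lemma indicator_mem_RF {E : Type*} [Fintype E] [DecidableEq E] {T S : Set E} (h : T ⊆ S) :
    T.indicator (1 : E → ℝ) ∈ RF E S := by
  rw [pi_eq_sum_univ' (T.indicator (1 : E → ℝ))]
  refine Submodule.sum_mem _ fun e _ => ?_
  by_cases he : e ∈ T
  · refine Submodule.smul_mem _ _ (Submodule.subset_span ⟨e, h he, ?_⟩)
    ext x
    simp [Pi.single_apply, eq_comm]
  · rw [Set.indicator_of_notMem he, zero_smul]; exact Submodule.zero_mem _

lemma RF_mono {E : Type*} [Fintype E] [DecidableEq E] {T S : Set E} (h : T ⊆ S) :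
    RF E T ≤ RF E S := Submodule.span_mono (Set.image_mono h)

lemma mem_Ccone_iff (a : E → (M →ₗ[ℝ] ℝ)) (r : E → ℝ) (F : Set E) (R : Set M)
    (k : ℕ) (flag : Fin (k + 1) → Set E) (v : tildeN a) :
    (Submodule.Quotient.mk v : Wspace a r F R) ∈ Ccone a r F R k flag ↔
      ∃ b ∈ bergCone k flag, Phibar a v - b ∈ RF E F := by
  have : PhibarFR a r F R (Submodule.Quotient.mk v) =
      Submodule.Quotient.mk (p := RF E F) (Phibar a v) := rfl
  simp only [Ccone, Set.mem_preimage, this, Set.mem_image, Submodule.mkQ_apply]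
  refine exists_congr fun b => and_congr_right fun _ => ?_
  rw [eq_comm, Submodule.Quotient.eq]

lemma truncEmb_lt (k : ℕ) (j : Fin (k + 1)) (i : Fin (k - j.val + 1)) :
    j.val + i.val < k + 1 := by
  have := i.isLt; have := j.isLt; omega

/-- The index embedding of the truncated flag. -/
def truncEmb (k : ℕ) (j : Fin (k + 1)) (i : Fin (k - j.val + 1)) : Fin (k + 1) :=
  ⟨j.val + i.val, truncEmb_lt k j i⟩

lemma truncEmb_inj (k : ℕ) (j : Fin (k + 1)) : Function.Injective (truncEmb k j) := by
  intro x y h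
  have := congrArg Fin.val h
  simp only [truncEmb] at this
  exact Fin.ext (by omega)

lemma truncEmb_range (k : ℕ) (j i : Fin (k + 1)) (h : j ≤ i) : ∃ x, truncEmb k j x = i := by
  have h' : j.val ≤ i.val := h
  refine ⟨⟨i.val - j.val, by omega⟩, Fin.ext ?_⟩
  simp only [truncEmb]; omega

lemma bergCone_trunc_subset {E : Type*} [Fintype E] (k : ℕ) (flag : Fin (k + 1) → Set E)
    (j : Fin (k + 1)) :
    bergCone (k - j.val) (fun i => flag (truncEmb k j i)) ⊆ bergCone k flag := by
  rintro v ⟨c, hc0, hc, rfl⟩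
  have hinj := truncEmb_inj k j
  refine ⟨Function.extend (truncEmb k j) c 0, ?_, ?_, ?_⟩
  · by_cases h : ∃ x, truncEmb k j x = 0
    · obtain ⟨x, hx⟩ := h
      rw [← hx, hinj.extend_apply]
      have := congrArg Fin.val hx
      simp only [truncEmb, Fin.val_zero] at this
      have hx0 : x = 0 := Fin.ext (by rw [Fin.val_zero]; omega)
      rw [hx0, hc0]
    · rw [Function.extend_apply' _ _ _ h]; rfl
  · intro i hi hik
    by_cases h : ∃ x, truncEmb k j x = i
    · obtain ⟨x, rfl⟩ := h
      rw [hinj.extend_apply]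
      simp only [truncEmb] at hik
      rcases Nat.eq_zero_or_pos x.val with h0 | h0
      · have hx0 : x = 0 := Fin.ext (by simpa using h0)
        rw [hx0, hc0]
      · exact hc x h0 (by omega)
    · rw [Function.extend_apply' _ _ _ h]; exact le_rfl
  · refine Fintype.sum_of_injective (truncEmb k j) hinj _ _ ?_ ?_
    · intro i hi
      rw [Function.extend_apply' _ _ _ hi]
      simp
    · intro i
      rw [hinj.extend_apply]

lemma bergCone_mod {E : Type*} [Fintype E] [DecidableEq E] (k : ℕ) (flag : Fin (k + 1) → Set E)
    (hmono : Monotone flag) (j : Fin (k + 1)) (b : E → ℝ) (hb : b ∈ bergCone k flag) :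
    ∃ b' ∈ bergCone (k - j.val) (fun i => flag (truncEmb k j i)), b - b' ∈ RF E (flag j) := by
  obtain ⟨c, hc0, hc, rfl⟩ := hb
  refine ⟨_, ⟨fun i => if i = 0 then 0 else c (truncEmb k j i), by simp, ?_, rfl⟩, ?_⟩
  · intro i hi hik
    have : i ≠ 0 := by rintro rfl; simp at hi
    simp only [this, if_false]
    exact hc _ (by simp only [truncEmb]; omega) (by simp only [truncEmb]; omega)
  · have key : ∑ i, (if i = 0 then 0 else c (truncEmb k j i)) •
          (flag (truncEmb k j i)).indicator (1 : E → ℝ) =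
        ∑ i, (if j < i then c i else 0) • (flag i).indicator (1 : E → ℝ) := by
      refine Fintype.sum_of_injective (truncEmb k j) (truncEmb_inj k j) _ _ ?_ ?_
      · intro i hi
        have : ¬ j < i := fun h => hi (truncEmb_range k j i h.le)
        simp [this]
      · intro i
        have : j < truncEmb k j i ↔ i ≠ 0 := by
          rw [Fin.lt_def, Ne, Fin.ext_iff]
          simp only [truncEmb, Fin.val_zero]
          omega
        by_cases h : i = 0
        · rw [if_pos h, if_neg (by rw [this]; simp [h])]
        · rw [if_neg h, if_pos (this.2 h)]
    rw [key, ← Finset.sum_sub_distrib]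
    refine Submodule.sum_mem _ fun i _ => ?_
    rw [← sub_smul]
    by_cases h : j < i
    · simp [h]
    · exact Submodule.smul_mem _ _ (indicator_mem_RF (hmono (not_lt.1 h)))

/-- Second part of Lemma 6.2: if `S = F_j` is a flat of the flag `𝒻` and `R'` is a face of
`𝒜_S` contained in the closure of `R`, then `span(σ_{F,R}) ⊆ span(σ_{S,R'})` and the induced
map `W_{F,R} → W_{S,R'}` maps `C^{(F,R)}_𝒻` onto `C^{(S,R')}_{trunc_S(𝒻)}`. -/
theorem Ccone_projects_onto_truncated
    (a : E → (M →ₗ[ℝ] ℝ)) (r : E → ℝ)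
    (ha : ∀ e, a e ≠ 0) (hspan : Submodule.span ℝ (Set.range a) = ⊤)
    (F : Set E) (hF : IsFlat a F) (R : Set M) (hR : IsFace a r F R)
    (k : ℕ) (flag : Fin (k + 1) → Set E)
    (hflat : ∀ i, IsFlat a (flag i)) (hmono : StrictMono flag)
    (h0 : flag 0 = F) (hlast : flag (Fin.last k) = Set.univ)
    (j : Fin (k + 1)) (S : Set E) (hS : S = flag j)
    (R' : Set M) (hR' : IsFace a r S R') (hsub : R' ⊆ closure R) :
    ∃ hle : spanSigma a r F R ≤ spanSigma a r S R',
      (Submodule.mapQ (spanSigma a r F R) (spanSigma a r S R') LinearMap.id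
            (fun x hx => hle hx)) ''
          Ccone a r F R k flag =
        Ccone a r S R' (k - j.val)
          (fun i : Fin (k - j.val + 1) =>
            flag ⟨j.val + i.val, by have := i.isLt; have := j.isLt; omega⟩) := by
  subst hS
  have hFS : F ⊆ flag j := by rw [← h0]; exact hmono.monotone (Fin.zero_le j)
  refine ⟨spanSigma_mono a r hFS hsub, ?_⟩
  change _ = Ccone a r (flag j) R' (k - j.val) (fun i => flag (truncEmb k j i))
  ext w
  obtain ⟨v, rfl⟩ := Submodule.Quotient.mk_surjective _ w
  constructor
  · rintro ⟨u, hu, huv⟩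
    obtain ⟨u, rfl⟩ := Submodule.Quotient.mk_surjective _ u
    rw [← huv, Submodule.mapQ_apply, LinearMap.id_apply, mem_Ccone_iff]
    rw [mem_Ccone_iff] at hu
    obtain ⟨b, hb, hub⟩ := hu
    obtain ⟨b', hb', hbb⟩ := bergCone_mod k flag hmono.monotone j b hb
    refine ⟨b', hb', ?_⟩
    have := Submodule.add_mem _ (RF_mono hFS hub) hbb
    rwa [sub_add_sub_cancel] at this
  · intro hv
    rw [mem_Ccone_iff] at hv
    obtain ⟨b, hb, hvb⟩ := hv
    obtain ⟨s, hs, hsx⟩ := RF_le_map a r hR' hvb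
    refine ⟨Submodule.Quotient.mk (v - s), ?_, ?_⟩
    · rw [mem_Ccone_iff]
      refine ⟨b, bergCone_trunc_subset k flag j hb, ?_⟩
      rw [map_sub, hsx]
      simp
    · rw [Submodule.mapQ_apply, LinearMap.id_apply, Submodule.Quotient.eq]
      simpa using hs

end
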